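/- With the construction below, for all disjoint subsets I, J ⊆ {1,...,n}, not both empty, one has |∑_{i∈I} a_i − ∑_{j∈J} a_j| ≥ 2·n. -/

import Mathlib

theorem chv_aux_nat {n : ℕ} (p : Fin n → ℕ) (hp : ∀ i, (p i).Prime) (hinj : Function.Injective p)
    (I J : Finset (Fin n)) (hd : Disjoint I J) (k : Fin n) (hk : k ∈ I)
    (hmax : ∀ i ∈ I ∪ J, p i ≤ p k)
    (h : (∏ i ∈ I, (p i - 1)) * ∏ j ∈ J, p j = (∏ j ∈ J, (p j - 1)) * ∏ i ∈ I, p i) : False := by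
  have h1 : p k ∣ (∏ i ∈ I, (p i - 1)) * ∏ j ∈ J, p j := by
    rw [h]
    exact Dvd.dvd.mul_left (Finset.dvd_prod_of_mem p hk) _
  rcases (hp k).dvd_mul.1 h1 with h2 | h2
  · obtain ⟨i, hi, h3⟩ := ((hp k).prime.dvd_finset_prod_iff _).1 h2
    have h4 := hmax i (Finset.mem_union_left _ hi)
    have h5 := (hp i).two_le
    have h6 := Nat.le_of_dvd (by omega) h3
    omega
  · obtain ⟨j, hj, h3⟩ := ((hp k).prime.dvd_finset_prod_iff _).1 h2
    have h4 := hinj ((Nat.prime_dvd_prime_iff_eq (hp k) (hp j)).1 h3)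
    subst h4
    exact Finset.disjoint_left.1 hd hk hj

theorem chv_exp_sum {n : ℕ} (p : Fin n → ℕ) (hp : ∀ i, (p i).Prime)
    (w : Fin n → ℝ) (hw : ∀ i, w i = -Real.log (1 - 1 / (p i : ℝ))) (I : Finset (Fin n)) :
    Real.exp (-∑ i ∈ I, w i) * ((∏ i ∈ I, p i : ℕ) : ℝ) = ((∏ i ∈ I, (p i - 1) : ℕ) : ℝ) := by
  rw [← Finset.sum_neg_distrib, Real.exp_sum, Nat.cast_prod, Nat.cast_prod,
    ← Finset.prod_mul_distrib]
  refine Finset.prod_congr rfl fun i _ => ?_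
  have h2 : (2 : ℝ) ≤ p i := by exact_mod_cast (hp i).two_le
  have h3 : 1 / (p i : ℝ) < 1 := by
    rw [div_lt_one (by linarith)]; linarith
  rw [hw, neg_neg, Real.exp_log (by linarith), Nat.cast_sub (hp i).one_le]
  have : (p i : ℝ) ≠ 0 := by linarith
  field_simp
  simp

theorem chv_ne {n : ℕ} (p : Fin n → ℕ) (hp : ∀ i, (p i).Prime) (hinj : Function.Injective p)
    (w : Fin n → ℝ) (hw : ∀ i, w i = -Real.log (1 - 1 / (p i : ℝ)))
    (I J : Finset (Fin n)) (hd : Disjoint I J) (hne : (I ∪ J).Nonempty) :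
    ∑ i ∈ I, w i ≠ ∑ j ∈ J, w j := by
  intro h
  have hI := chv_exp_sum p hp w hw I
  have hJ := chv_exp_sum p hp w hw J
  rw [← h] at hJ
  have key : (∏ i ∈ I, (p i - 1)) * ∏ j ∈ J, p j = (∏ j ∈ J, (p j - 1)) * ∏ i ∈ I, p i := by
    have : (((∏ i ∈ I, (p i - 1) : ℕ) : ℝ)) * ((∏ j ∈ J, p j : ℕ) : ℝ)
        = ((∏ j ∈ J, (p j - 1) : ℕ) : ℝ) * ((∏ i ∈ I, p i : ℕ) : ℝ) := by
      rw [← hI, ← hJ]; ring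
    exact_mod_cast this
  obtain ⟨k, hk, hmax⟩ := Finset.exists_max_image (I ∪ J) p hne
  rcases Finset.mem_union.1 hk with hk | hk
  · exact chv_aux_nat p hp hinj I J hd k hk hmax key
  · exact chv_aux_nat p hp hinj J I hd.symm k hk (by rwa [Finset.union_comm]) key.symm

theorem chv_diff {n : ℕ} (g : Fin n → ℝ) (h0 : ∀ i, 0 ≤ g i) (h1 : ∀ i, g i ≤ 1)
    (I J : Finset (Fin n)) : |∑ i ∈ I, g i - ∑ j ∈ J, g j| ≤ n := by
  have hb : ∀ K : Finset (Fin n), 0 ≤ ∑ i ∈ K, g i ∧ ∑ i ∈ K, g i ≤ n := by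
    intro K
    refine ⟨Finset.sum_nonneg fun i _ => h0 i, ?_⟩
    have h2 : ∑ i ∈ K, g i ≤ ∑ i ∈ K, (1 : ℝ) := Finset.sum_le_sum fun i _ => h1 i
    have h3 : K.card ≤ n := by simpa using Finset.card_le_univ K
    have h4 : (K.card : ℝ) ≤ n := by exact_mod_cast h3
    simp at h2
    linarith
  have := hb I
  have := hb J
  rw [abs_le]
  constructor <;> linarith

open Finset in
/-- In Chvátal's construction, disjoint not-both-empty subsets have subset sums differing by at least `2n`. -/
theorem chvatal_disjoint_sums_gap
    (n : ℕ) (hn : 1 ≤ n)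
    (p : Fin n → ℕ) (hp : ∀ i, (p i).Prime) (hinj : Function.Injective p)
    (w : Fin n → ℝ) (hw : ∀ i, w i = -Real.log (1 - 1 / (p i : ℝ)))
    (hmono : ∀ i j : Fin n, i ≤ j → w j ≤ w i)
    (hratio : w ⟨0, by omega⟩ ≤ 2 * w ⟨n - 1, by omega⟩)
    (ε : ℝ)
    (hε : IsLeast {d : ℝ | ∃ I J : Finset (Fin n), Disjoint I J ∧ (I ∪ J).Nonempty ∧
        d = |∑ i ∈ I, w i - ∑ j ∈ J, w j|} ε)
    (x : ℝ) (hx : 4 * n / ε < x)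
    (c : ℕ)
    (hc : c = ((Finset.univ : Finset (Fin n)).filter fun i : Fin n => (i : ℕ) < n / 2).lcm
        fun i => (⌊w i * x⌋).toNat)
    (a : Fin n → ℕ)
    (ha : ∀ i : Fin n, a i = if (i : ℕ) < n / 2 then c * (⌊w i * x⌋).toNat
        else c * (⌊w i * x⌋).toNat + 1)
    : ∀ I J : Finset (Fin n), Disjoint I J → (I ∪ J).Nonempty → (2 * n : ℤ) ≤ |∑ i ∈ I, (a i : ℤ) - ∑ j ∈ J, (a j : ℤ)| := by
  intro I J hd hne
  have hεpos : 0 < ε := by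
    obtain ⟨I', J', hd', hne', h⟩ := hε.1
    rw [h]
    exact abs_pos.2 (sub_ne_zero.2 (chv_ne p hp hinj w hw I' J' hd' hne'))
  have hn1 : (1 : ℝ) ≤ n := by exact_mod_cast hn
  have hεx : 4 * (n : ℝ) < ε * x := by
    rw [div_lt_iff₀ hεpos] at hx; linarith
  have hxpos : 0 < x := by
    by_contra hcon
    nlinarith
  have hwpos : ∀ i, 0 < w i := by
    intro i
    have h2 : (2 : ℝ) ≤ p i := by exact_mod_cast (hp i).two_le
    have h3 : 1 / (p i : ℝ) < 1 := by
      rw [div_lt_one (by linarith)]; linarith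
    have h4 : 0 < 1 / (p i : ℝ) := by positivity
    rw [hw]
    have := Real.log_neg (x := 1 - 1 / (p i : ℝ)) (by linarith) (by linarith)
    linarith
  have hwx : ∀ i, 1 ≤ w i * x := by
    intro i
    have h1 : ε ≤ w i := by
      apply hε.2
      refine ⟨{i}, ∅, by simp, by simp, ?_⟩
      simp [abs_of_pos (hwpos i)]
    nlinarith
  set f : Fin n → ℕ := fun i => (⌊w i * x⌋).toNat with hf
  have hfc : ∀ i, (f i : ℝ) = (⌊w i * x⌋ : ℝ) := by
    intro i
    have h1 : 0 ≤ ⌊w i * x⌋ := Int.floor_nonneg.2 (by linarith [hwx i])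
    have h2 : ((f i : ℕ) : ℤ) = ⌊w i * x⌋ := Int.toNat_of_nonneg h1
    exact_mod_cast h2
  have hfpos : ∀ i, f i ≠ 0 := by
    intro i h0
    have h1 : 1 ≤ ⌊w i * x⌋ := Int.le_floor.2 (by simpa using hwx i)
    have h2 : f i = (⌊w i * x⌋).toNat := rfl
    omega
  have hcpos : 1 ≤ c := by
    rw [Nat.one_le_iff_ne_zero, hc, Ne, Finset.lcm_eq_zero_iff]
    rintro ⟨i, _, hi⟩
    exact hfpos i hi
  set b : Fin n → ℝ := fun i => if (i : ℕ) < n / 2 then 0 else 1 with hb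
  have hab : ∀ i, (a i : ℝ) = c * f i + b i := by
    intro i
    rw [ha]
    simp only [hb, hf]
    split_ifs <;> simp
  have hbd := chv_diff b (fun i => by simp only [hb]; split_ifs <;> norm_num)
    (fun i => by simp only [hb]; split_ifs <;> norm_num) I J
  have hgd := chv_diff (fun i => w i * x - f i)
    (fun i => by rw [hfc]; linarith [Int.floor_le (w i * x)])
    (fun i => by rw [hfc]; linarith [Int.lt_floor_add_one (w i * x)]) I J
  simp only [Finset.sum_sub_distrib, ← Finset.sum_mul] at hgd
  have hW : ε ≤ |∑ i ∈ I, w i - ∑ j ∈ J, w j| := hε.2 ⟨I, J, hd, hne, rfl⟩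
  have hWx : 4 * (n : ℝ) < |(∑ i ∈ I, w i - ∑ j ∈ J, w j) * x| := by
    rw [abs_mul, abs_of_pos hxpos]
    nlinarith
  have hF : 3 * (n : ℝ) ≤ |∑ i ∈ I, (f i : ℝ) - ∑ j ∈ J, (f j : ℝ)| := by
    have h1 := abs_sub_abs_le_abs_sub ((∑ i ∈ I, w i - ∑ j ∈ J, w j) * x)
      (∑ i ∈ I, (f i : ℝ) - ∑ j ∈ J, (f j : ℝ))
    have h2 : (∑ i ∈ I, w i - ∑ j ∈ J, w j) * x - (∑ i ∈ I, (f i : ℝ) - ∑ j ∈ J, (f j : ℝ))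
      = (∑ i ∈ I, w i) * x - ∑ i ∈ I, (f i : ℝ) - ((∑ j ∈ J, w j) * x - ∑ j ∈ J, (f j : ℝ)) := by
      ring
    rw [h2] at h1
    linarith
  have hc1 : (1 : ℝ) ≤ c := by exact_mod_cast hcpos
  have hA : ∑ i ∈ I, (a i : ℝ) - ∑ j ∈ J, (a j : ℝ)
      = c * (∑ i ∈ I, (f i : ℝ) - ∑ j ∈ J, (f j : ℝ)) + (∑ i ∈ I, b i - ∑ j ∈ J, b j) := by
    simp only [hab, Finset.sum_add_distrib, ← Finset.mul_sum]
    ring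
  have hcF : 3 * (n : ℝ) ≤ |c * (∑ i ∈ I, (f i : ℝ) - ∑ j ∈ J, (f j : ℝ))| := by
    rw [abs_mul, abs_of_pos (by linarith : (0 : ℝ) < c)]
    nlinarith
  have hfin : 2 * (n : ℝ) ≤ |∑ i ∈ I, (a i : ℝ) - ∑ j ∈ J, (a j : ℝ)| := by
    rw [hA]
    have h1 := abs_sub_abs_le_abs_add (c * (∑ i ∈ I, (f i : ℝ) - ∑ j ∈ J, (f j : ℝ)))
      (∑ i ∈ I, b i - ∑ j ∈ J, b j)
    linarith
  exact_mod_cast hfin
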